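/- arXiv:1906.00763 — 2 statements merged into one kernel-verified Lean document; each statement's English description precedes it below -/
import Mathlib

section
/- Let X, Y be nominal Perm-sets. The map p : F(X ∗ Y) → F(X) × F(Y) given by p([m, (x, y)]) = ([m, x], [m, y]) is a well-defined Sb-equivariant bijection, natural in X and Y, and F(1) is a singleton for 1 a one-element Perm-set. Hence F is strong monoidal from (permNom, ∗, 1) to (sbNom, ×, 1). -/
/-!
The map `p [m, (x, y)] = ([m, x], [m, y])` is well defined because a support of `(x, y)` supports
both components, and equivariance and naturality are immediate on representatives. The content is
bijectivity.

*Equality in `F(X)`* (`FElt_eq_iff`): `[m, x] = [m', x']` exactly when some finite permutation `g`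
satisfies `g • x = x'` and `m = m' ∘ g` on some finite support of `x`. Transitivity of this relation
rests on the fact that finite supports are closed under intersection (`Supports.inter`).

*Injectivity*: given `g₁`, `g₂` witnessing `[m, x] = [m', x']` and `[m, y] = [m', y']`, the supports
can be shrunk to `C`, `D` such that both `C, D` and `g₁ C, g₂ D` are disjoint. Then `g₁` on `C` and
`g₂` on `D` glue to an injection of a finite set, which extends to a finite permutation
(`exists_perm_extend`); it witnesses `[m, (x, y)] = [m', (x', y')]`.

*Surjectivity*: given `[m₁, x]` and `[m₂, y]`, rename `y` to `h • y` with support fresh for `x`. A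
single substitution `n` acts like `m₁` on the support of `x` and like `m₂ ∘ h⁻¹` on that of `h • y`,
so `[n, (x, h • y)]` is a preimage.
-/

/-- The monoid of finitely-supported substitutions of atoms (`𝔸 = ℕ`). -/
def Sb : Submonoid (Function.End ℕ) where
  carrier := {m | {a | m a ≠ a}.Finite}
  one_mem' := by
    have h : {a : ℕ | (1 : Function.End ℕ) a ≠ a} = ∅ := by
      ext a
      simp only [Set.mem_setOf_eq, Set.mem_empty_iff_false, iff_false, not_not]
      rfl
    simp [Set.mem_setOf_eq, h]
  mul_mem' := by
    intro m n hm hn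
    refine Set.Finite.subset (Set.Finite.union hm hn) ?_
    intro a ha
    simp only [Set.mem_setOf_eq, Set.mem_union]
    by_contra hcon
    push_neg at hcon
    apply ha
    show m (n a) = a
    rw [hcon.2, hcon.1]

/-- The group (here: submonoid) of finitely-supported permutations of atoms. -/
def Pm : Submonoid (Function.End ℕ) where
  carrier := {m | {a | m a ≠ a}.Finite ∧ Function.Bijective m}
  one_mem' := ⟨Sb.one_mem, Function.bijective_id⟩
  mul_mem' := by
    intro m n hm hn
    exact ⟨Sb.mul_mem hm.1 hn.1, Function.Bijective.comp hm.2 hn.2⟩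

theorem Pm_le_Sb : Pm ≤ Sb := fun _ hm => hm.1

/-- The inclusion of the permutations into the substitutions. -/
def incl : Pm →* Sb := Submonoid.inclusion Pm_le_Sb

/-- `C` is an `M`-support of `x`. -/
def Supports (M : Submonoid (Function.End ℕ)) {X : Type*} [MulAction M X]
    (C : Set ℕ) (x : X) : Prop :=
  ∀ m₁ m₂ : M, (∀ a ∈ C, m₁.1 a = m₂.1 a) → m₁ • x = m₂ • x

/-- `X` is a nominal `M`-set: every element has a finite `M`-support. -/
def IsNominal (M : Submonoid (Function.End ℕ)) (X : Type*) [MulAction M X] : Prop :=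
  ∀ x : X, ∃ C : Set ℕ, C.Finite ∧ Supports M C x

/-- The `Perm`-action on an `Sb`-set, obtained by restriction. -/
instance (priority := 100) permActionOfSb {X : Type*} [MulAction Sb X] : MulAction Pm X :=
  MulAction.compHom X incl

/-- The generating relation for the quotient defining `F(X)`. -/
inductive FGen (X : Type*) [MulAction Pm X] : Sb × X → Sb × X → Prop
  | act (m : Sb) (g : Pm) (x : X) : FGen X (m, g • x) (m * incl g, x)
  | supp (m m' : Sb) (x : X) (C : Set ℕ) (hC : C.Finite) (hs : Supports Pm C x)
      (h : ∀ a ∈ C, m.1 a = m'.1 a) : FGen X (m, x) (m', x)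

/-- The free nominal `Sb`-set over a nominal `Perm`-set: `F(X) = (Sb × X)/∼`. -/
def FObj (X : Type*) [MulAction Pm X] : Type _ := Quot (FGen X)

/-- The equivalence class `[m, x]`. -/
def FElt {X : Type*} [MulAction Pm X] (m : Sb) (x : X) : FObj X :=
  Quot.mk (FGen X) (m, x)

/-- The `Sb`-action on `F(X)`: `n • [m, x] = [n * m, x]`. -/
instance FObj.instMulAction (X : Type*) [MulAction Pm X] : MulAction Sb (FObj X) where
  smul n := Quot.lift (fun p => FElt (n * p.1) p.2) (by
    intro p q h
    cases h with
    | act m g x =>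
        show FElt (n * m) (g • x) = FElt (n * (m * incl g)) x
        rw [← mul_assoc]
        exact Quot.sound (FGen.act (n * m) g x)
    | supp m m' x C hC hs hag =>
        show FElt (n * m) x = FElt (n * m') x
        exact Quot.sound (FGen.supp (n * m) (n * m') x C hC hs (fun a ha => by
          show n.1 (m.1 a) = n.1 (m'.1 a)
          rw [hag a ha])))
  one_smul := by
    intro p
    induction p using Quot.ind with
    | _ p => show FElt (1 * p.1) p.2 = FElt p.1 p.2; rw [one_mul]
  mul_smul := by
    intro n n' p
    induction p using Quot.ind with
    | _ p =>
      show FElt (n * n' * p.1) p.2 = FElt (n * (n' * p.1)) p.2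
      rw [mul_assoc]

theorem FObj.smul_def {X : Type*} [MulAction Pm X] (n m : Sb) (x : X) :
    n • (FElt m x) = FElt (n * m) x := rfl
theorem Supports.perm_smul {X : Type*} [MulAction Pm X] {C : Set ℕ} {x : X}
    (h : Supports Pm C x) (g : Pm) : Supports Pm (g.1 '' C) (g • x) := by
  intro m₁ m₂ hag
  have h' : (m₁ * g) • x = (m₂ * g) • x :=
    h (m₁ * g) (m₂ * g) (fun a ha => hag (g.1 a) ⟨a, ha, rfl⟩)
  simpa [mul_smul] using h'

/-- Two elements (of possibly different nominal `Perm`-sets) are separated if they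
have disjoint finite supports. -/
def Separated {X Y : Type*} [MulAction Pm X] [MulAction Pm Y] (x : X) (y : Y) : Prop :=
  ∃ C D : Set ℕ, C.Finite ∧ D.Finite ∧ Supports Pm C x ∧ Supports Pm D y ∧ Disjoint C D

theorem Separated.perm_smul {X Y : Type*} [MulAction Pm X] [MulAction Pm Y]
    {x : X} {y : Y} (h : Separated x y) (g : Pm) : Separated (g • x) (g • y) := by
  obtain ⟨C, D, hC, hD, hsx, hsy, hdis⟩ := h
  exact ⟨g.1 '' C, g.1 '' D, hC.image _, hD.image _, hsx.perm_smul g, hsy.perm_smul g,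
    (Set.disjoint_image_iff g.2.2.injective).2 hdis⟩

/-- The separated product `X ∗ Y`. -/
def SepProd (X Y : Type*) [MulAction Pm X] [MulAction Pm Y] : Type _ :=
  {p : X × Y // Separated p.1 p.2}

instance SepProd.instMulAction (X Y : Type*) [MulAction Pm X] [MulAction Pm Y] :
    MulAction Pm (SepProd X Y) where
  smul g p := ⟨g • p.1, by
    have := p.2.perm_smul g
    exact this⟩
  one_smul p := Subtype.ext (one_smul _ _)
  mul_smul g h p := Subtype.ext (mul_smul g h p.1)

/-- The letterwise action on words. -/
instance List.instMulActionOfSubstitutions {M : Submonoid (Function.End ℕ)} {X : Type*}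
    [MulAction M X] : MulAction M (List X) where
  smul m l := l.map (m • ·)
  one_smul l := by
    show l.map _ = l
    simp
  mul_smul m n l := by
    show l.map _ = (l.map _).map _
    simp [mul_smul]

theorem List.smul_def {M : Submonoid (Function.End ℕ)} {X : Type*} [MulAction M X]
    (m : M) (l : List X) : m • l = l.map (m • ·) := rfl

/-- Separated words over `X`: words whose letters are pairwise separated. -/
def SepW (X : Type*) [MulAction Pm X] : Type _ := {l : List X // l.Pairwise Separated}

instance SepW.instMulAction (X : Type*) [MulAction Pm X] : MulAction Pm (SepW X) where
  smul g l := ⟨g • l.1, by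
    rw [List.smul_def]
    exact List.Pairwise.map _ (fun {x y} h => h.perm_smul g) l.2⟩
  one_smul l := Subtype.ext (one_smul _ _)
  mul_smul g h l := Subtype.ext (mul_smul g h l.1)
/-- `M`-equivariance of a function between `M`-sets. -/
def Equivariant (M : Submonoid (Function.End ℕ)) {X Y : Type*} [MulAction M X]
    [MulAction M Y] (f : X → Y) : Prop :=
  ∀ (m : M) (x : X), f (m • x) = m • f x

/-! ### Finite permutations and supports -/

/-- An injection defined on a finite set of atoms extends to a finitely supported permutation. -/
theorem exists_perm_extend (A : Set ℕ) (hA : A.Finite) (f : ℕ → ℕ) (hf : Set.InjOn f A) :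
    ∃ g : Pm, ∀ a ∈ A, g.1 a = f a := by
  classical
  obtain ⟨A, rfl⟩ := hA.exists_finset_coe
  -- The extension permutes `A ∪ f(A)` and fixes every other atom.
  set t : Finset ℕ := A ∪ A.image f with ht
  obtain ⟨e, he⟩ := Finset.exists_equiv_extend_of_card_eq (α := t) (t := t)
    (Fintype.card_coe t) (s := Finset.univ.filter (fun i : t => i.1 ∈ A))
    (f := fun i => f i.1)
    (by
      intro b hb
      simp only [Finset.mem_image, Finset.mem_filter, Finset.mem_univ, true_and] at hb
      obtain ⟨i, hi, rfl⟩ := hb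
      exact Finset.mem_union_right _ (Finset.mem_image_of_mem f hi))
    (by
      intro i hi j hj hij
      simp only [Finset.coe_filter, Finset.mem_univ, true_and, Set.mem_ofPred_eq] at hi hj
      exact Subtype.ext (hf hi hj hij))
  let e' : Equiv.Perm {a // a ∈ t} := e
  let E : Equiv.Perm ℕ := Equiv.Perm.ofSubtype e'
  refine ⟨⟨fun a => E a, ?_, E.bijective⟩, ?_⟩
  · refine Set.Finite.subset t.finite_toSet ?_
    intro a ha
    by_contra hat
    exact ha (Equiv.Perm.ofSubtype_apply_of_not_mem e' hat)
  · intro a ha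
    have hat : a ∈ t := Finset.mem_union_left _ ha
    show E a = f a
    rw [show E a = (e' ⟨a, hat⟩ : ℕ) from Equiv.Perm.ofSubtype_apply_of_mem e' hat]
    exact he ⟨a, hat⟩ (by simpa using ha)

theorem Pm.exists_inv (g : Pm) : ∃ g' : Pm, g' * g = 1 := by
  let e := Equiv.ofBijective g.1 g.2.2
  refine ⟨⟨fun a => e.symm a, ?_, e.symm.bijective⟩, ?_⟩
  · refine Set.Finite.subset g.2.1 ?_
    intro a ha h
    exact ha ((Equiv.symm_apply_eq e).2 h.symm)
  · apply Subtype.ext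
    funext a
    exact e.symm_apply_apply a

theorem exists_strict_bound {S : Set ℕ} (hS : S.Finite) : ∃ N, ∀ a ∈ S, a < N := by
  obtain ⟨N, hN⟩ := hS.bddAbove
  exact ⟨N + 1, fun a ha => Nat.lt_succ_of_le (hN ha)⟩

/-- Finite supports are closed under intersection. Given `m₁`, `m₂` agreeing on `C ∩ D`, a
permutation `h` fixing `C` pointwise (hence fixing `x`) moves `D \ C` to atoms fixed by both `m₁`
and `m₂`; thus `m₁` and `m₂` agree on the support `h(D)` of `h • x = x`. -/
theorem Supports.inter {X : Type*} [MulAction Pm X] {C D : Set ℕ} {x : X}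
    (hC : C.Finite) (hD : D.Finite) (hsC : Supports Pm C x) (hsD : Supports Pm D x) :
    Supports Pm (C ∩ D) x := by
  classical
  intro m₁ m₂ hag
  obtain ⟨N, hN⟩ := exists_strict_bound (((hC.union hD).union m₁.2.1).union m₂.2.1)
  obtain ⟨h, hh⟩ := exists_perm_extend (C ∪ D) (hC.union hD)
    (fun a => if a ∈ C then a else a + N) (by
      intro a ha b hb hab
      have h1 := hN a (Or.inl (Or.inl ha))
      have h2 := hN b (Or.inl (Or.inl hb))
      dsimp only at hab
      split_ifs at hab <;> omega)
  have hx : h • x = x := by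
    have := hsC h 1 (fun a ha => by
      rw [hh a (Or.inl ha), if_pos ha]; rfl)
    rwa [one_smul] at this
  have hs := hsD.perm_smul h
  rw [hx] at hs
  apply hs
  rintro _ ⟨a, ha, rfl⟩
  rw [hh a (Or.inr ha)]
  by_cases haC : a ∈ C
  · rw [if_pos haC]
    exact hag a ⟨haC, ha⟩
  · rw [if_neg haC]
    have h1 : m₁.1 (a + N) = a + N := by
      by_contra hne
      have := hN (a + N) (Or.inl (Or.inr hne))
      omega
    have h2 : m₂.1 (a + N) = a + N := by
      by_contra hne
      have := hN (a + N) (Or.inr hne)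
      omega
    rw [h1, h2]

/-! ### Equality in `F(X)` -/

/-- The explicit form of the equivalence defining `F(X)`: `x` and `x'` lie in one orbit, via some
`g` with `m = m' ∘ g` on a finite support of `x`. -/
def FRel {X : Type*} [MulAction Pm X] (p q : Sb × X) : Prop :=
  ∃ (g : Pm) (C : Set ℕ), C.Finite ∧ Supports Pm C p.2 ∧ g • p.2 = q.2 ∧
    ∀ a ∈ C, p.1.1 a = q.1.1 (g.1 a)

theorem FRel.symm {X : Type*} [MulAction Pm X] {p q : Sb × X} (h : FRel p q) : FRel q p := by
  obtain ⟨g, C, hC, hs, hx, hag⟩ := h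
  obtain ⟨g', hg'⟩ := Pm.exists_inv g
  have hleft : ∀ a, g'.1 (g.1 a) = a := fun a => congrFun (congrArg Subtype.val hg') a
  refine ⟨g', g.1 '' C, hC.image _, ?_, ?_, ?_⟩
  · rw [← hx]
    exact hs.perm_smul g
  · rw [← hx, ← mul_smul, hg', one_smul]
  · rintro _ ⟨a, ha, rfl⟩
    rw [hleft, hag a ha]

theorem FRel.trans {X : Type*} [MulAction Pm X] {p q r : Sb × X} (h₁ : FRel p q)
    (h₂ : FRel q r) : FRel p r := by
  obtain ⟨g, C, hC, hs, hx, hag⟩ := h₁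
  obtain ⟨h, D, hD, hsD, hx', hag'⟩ := h₂
  obtain ⟨g', hg'⟩ := Pm.exists_inv g
  have hleft : ∀ a, g'.1 (g.1 a) = a := fun a => congrFun (congrArg Subtype.val hg') a
  have hright : ∀ a, g.1 (g'.1 a) = a := fun a => by
    obtain ⟨b, rfl⟩ := g.2.2.surjective a
    rw [hleft]
  have hsD' : Supports Pm (g'.1 '' D) p.2 := by
    have := hsD.perm_smul g'
    rwa [← hx, ← mul_smul, hg', one_smul] at this
  refine ⟨h * g, C ∩ g'.1 '' D, hC.inter_of_left _, hs.inter hC (hD.image _) hsD', ?_, ?_⟩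
  · rw [mul_smul, hx, hx']
  · rintro a ⟨ha, b, hb, rfl⟩
    rw [hag _ ha]
    show q.1.1 (g.1 (g'.1 b)) = r.1.1 (h.1 (g.1 (g'.1 b)))
    rw [hright, hag' b hb]

theorem FElt_eq_iff {X : Type*} [MulAction Pm X] (hX : IsNominal Pm X) (m m' : Sb) (x x' : X) :
    FElt m x = FElt m' x' ↔ FRel (m, x) (m', x') := by
  constructor
  · intro h
    have h' : Relation.EqvGen (FGen X) (m, x) (m', x') := Quot.eqvGen_exact h
    clear h
    generalize (m, x) = p at h' ⊢
    generalize (m', x') = q at h' ⊢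
    induction h' with
    | rel p q h =>
      cases h with
      | act m g x =>
        obtain ⟨C, hC, hs⟩ := hX x
        exact FRel.symm ⟨g, C, hC, hs, rfl, fun _ _ => rfl⟩
      | supp m m' x C hC hs h =>
        exact ⟨1, C, hC, hs, one_smul _ _, h⟩
    | refl p =>
      obtain ⟨C, hC, hs⟩ := hX p.2
      exact ⟨1, C, hC, hs, one_smul _ _, fun _ _ => rfl⟩
    | symm p q _ ih => exact ih.symm
    | trans p q r _ _ ih₁ ih₂ => exact ih₁.trans ih₂
  · rintro ⟨g, C, hC, hs, hx, hag⟩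
    dsimp only at hx hag hs
    subst hx
    exact (Quot.sound (FGen.supp m (m' * incl g) x C hC hs hag)).trans
      (Quot.sound (FGen.act m' g x)).symm

/-! ### The comparison map -/

theorem SepProd.supports_fst {X Y : Type*} [MulAction Pm X] [MulAction Pm Y] {C : Set ℕ}
    {s : SepProd X Y} (h : Supports Pm C s) : Supports Pm C s.1.1 :=
  fun m₁ m₂ hag => congrArg (fun t : SepProd X Y => t.1.1) (h m₁ m₂ hag)

theorem SepProd.supports_snd {X Y : Type*} [MulAction Pm X] [MulAction Pm Y] {C : Set ℕ}
    {s : SepProd X Y} (h : Supports Pm C s) : Supports Pm C s.1.2 :=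
  fun m₁ m₂ hag => congrArg (fun t : SepProd X Y => t.1.2) (h m₁ m₂ hag)

theorem SepProd.supports_union {X Y : Type*} [MulAction Pm X] [MulAction Pm Y] {C D : Set ℕ}
    {s : SepProd X Y} (hC : Supports Pm C s.1.1) (hD : Supports Pm D s.1.2) :
    Supports Pm (C ∪ D) s := fun m₁ m₂ hag =>
  Subtype.ext (Prod.ext (hC m₁ m₂ fun a ha => hag a (Or.inl ha))
    (hD m₁ m₂ fun a ha => hag a (Or.inr ha)))

/-- The comparison map `p [m, (x, y)] = ([m, x], [m, y])`. -/
def FSplit (X Y : Type*) [MulAction Pm X] [MulAction Pm Y] :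
    FObj (SepProd X Y) → FObj X × FObj Y :=
  Quot.lift (fun p => (FElt p.1 p.2.1.1, FElt p.1 p.2.1.2)) (by
    intro p q h
    cases h with
    | act m g s =>
      exact Prod.ext (Quot.sound (FGen.act m g s.1.1)) (Quot.sound (FGen.act m g s.1.2))
    | supp m m' s C hC hs h =>
      exact Prod.ext
        (Quot.sound (FGen.supp m m' s.1.1 C hC (SepProd.supports_fst hs) h))
        (Quot.sound (FGen.supp m m' s.1.2 C hC (SepProd.supports_snd hs) h)))

/-- A witness of `FRel` can be chosen with its support inside a given finite support `A` of `x`, and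
with image inside a given finite support `B` of `x'`. -/
theorem FRel.shrink {X : Type*} [MulAction Pm X] {m m' : Sb} {x x' : X}
    (h : FRel (m, x) (m', x')) {A B : Set ℕ} (hA : A.Finite) (hB : B.Finite)
    (hsA : Supports Pm A x) (hsB : Supports Pm B x') :
    ∃ (g : Pm) (C : Set ℕ), C.Finite ∧ Supports Pm C x ∧ g • x = x' ∧
      (∀ a ∈ C, m.1 a = m'.1 (g.1 a)) ∧ C ⊆ A ∧ ∀ a ∈ C, g.1 a ∈ B := by
  obtain ⟨g, C, hC, hs, hx, hag⟩ := h
  dsimp only at hs hx hag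
  obtain ⟨g', hg'⟩ := Pm.exists_inv g
  have hleft : ∀ a, g'.1 (g.1 a) = a := fun a => congrFun (congrArg Subtype.val hg') a
  have hright : ∀ a, g.1 (g'.1 a) = a := fun a => by
    obtain ⟨b, rfl⟩ := g.2.2.surjective a
    rw [hleft]
  have hsB' : Supports Pm (g'.1 '' B) x := by
    have := hsB.perm_smul g'
    rwa [← hx, ← mul_smul, hg', one_smul] at this
  refine ⟨g, (C ∩ A) ∩ g'.1 '' B, (hC.inter_of_left _).inter_of_left _,
    (hs.inter hC hA hsA).inter (hC.inter_of_left _) (hB.image _) hsB', hx,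
    fun a ha => hag a ha.1.1, fun a ha => ha.1.2, ?_⟩
  rintro _ ⟨_, b, hb, rfl⟩
  rwa [hright]

theorem FSplit_injective {X Y : Type*} [MulAction Pm X] [MulAction Pm Y]
    (hX : IsNominal Pm X) (hY : IsNominal Pm Y) : Function.Injective (FSplit X Y) := by
  classical
  rintro ⟨m, s⟩ ⟨m', s'⟩ h
  have h₁ : FElt m s.1.1 = FElt m' s'.1.1 := congrArg Prod.fst h
  have h₂ : FElt m s.1.2 = FElt m' s'.1.2 := congrArg Prod.snd h
  rw [FElt_eq_iff hX] at h₁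
  rw [FElt_eq_iff hY] at h₂
  obtain ⟨A, B, hA, hB, hsA, hsB, hAB⟩ := s.2
  obtain ⟨A', B', hA', hB', hsA', hsB', hAB'⟩ := s'.2
  obtain ⟨g₁, C, hC, hsC, hx, hagC, hCA, hgC⟩ := h₁.shrink hA hA' hsA hsA'
  obtain ⟨g₂, D, hD, hsD, hy, hagD, hDB, hgD⟩ := h₂.shrink hB hB' hsB hsB'
  have hDC : ∀ a ∈ D, a ∉ C := fun a haD haC =>
    Set.disjoint_left.1 hAB (hCA haC) (hDB haD)
  have himg : ∀ a ∈ C, ∀ b ∈ D, g₁.1 a ≠ g₂.1 b := fun a ha b hb hab =>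
    Set.disjoint_left.1 hAB' (hgC a ha) (hab ▸ hgD b hb)
  -- `g₁` on `C` and `g₂` on `D` have disjoint images, so they glue to an injection.
  obtain ⟨g, hg⟩ := exists_perm_extend (C ∪ D) (hC.union hD)
    (fun a => if a ∈ C then g₁.1 a else g₂.1 a) (by
      intro a ha b hb hab
      dsimp only at hab
      split_ifs at hab with haC hbC hbC
      · exact g₁.2.2.injective hab
      · exact absurd hab (himg a haC b (hb.resolve_left hbC))
      · exact absurd hab.symm (himg b hbC a (ha.resolve_left haC))
      · exact g₂.2.2.injective hab)
  have hgC' : ∀ a ∈ C, g.1 a = g₁.1 a := fun a ha => by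
    rw [hg a (Or.inl ha), if_pos ha]
  have hgD' : ∀ a ∈ D, g.1 a = g₂.1 a := fun a ha => by
    rw [hg a (Or.inr ha), if_neg (hDC a ha)]
  have hgs : g • s = s' := Subtype.ext (Prod.ext
    ((hsC g g₁ hgC').trans hx) ((hsD g g₂ hgD').trans hy))
  have hag : ∀ a ∈ C ∪ D, m.1 a = m'.1 (g.1 a) := by
    rintro a (ha | ha)
    · rw [hgC' a ha, hagC a ha]
    · rw [hgD' a ha, hagD a ha]
  rw [← hgs]
  exact (Quot.sound (FGen.supp m (m' * incl g) s (C ∪ D) (hC.union hD)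
    (SepProd.supports_union hsC hsD) hag)).trans (Quot.sound (FGen.act m' g s)).symm

theorem FSplit_surjective {X Y : Type*} [MulAction Pm X] [MulAction Pm Y]
    (hX : IsNominal Pm X) (hY : IsNominal Pm Y) : Function.Surjective (FSplit X Y) := by
  classical
  rintro ⟨⟨m₁, x⟩, ⟨m₂, y⟩⟩
  obtain ⟨C, hC, hsC⟩ := hX x
  obtain ⟨D, hD, hsD⟩ := hY y
  obtain ⟨N, hN⟩ := exists_strict_bound hC
  -- Shifting `D` above every atom of `C` makes the renamed `y` separated from `x`.
  obtain ⟨h, hh⟩ := exists_perm_extend D hD (fun a => a + N) (fun a _ b _ hab => by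
    dsimp only at hab
    omega)
  have hsep : Separated x (h • y) := by
    refine ⟨C, h.1 '' D, hC, hD.image _, hsC, hsD.perm_smul h, ?_⟩
    rw [Set.disjoint_left]
    rintro _ ha ⟨b, hb, rfl⟩
    have := hN _ ha
    rw [hh b hb] at this
    omega
  let n : Sb := ⟨fun b => if b ∈ C then m₁.1 b
      else if b ∈ (fun a => a + N) '' D then m₂.1 (b - N) else b, by
    refine Set.Finite.subset (hC.union (hD.image (fun a => a + N))) ?_
    intro b hb
    by_contra hcon
    rw [Set.mem_union, not_or] at hcon
    apply hb
    show (if b ∈ C then m₁.1 b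
      else if b ∈ (fun a => a + N) '' D then m₂.1 (b - N) else b) = b
    rw [if_neg hcon.1, if_neg hcon.2]⟩
  have hnC : ∀ a ∈ C, n.1 a = m₁.1 a := fun a ha => if_pos ha
  have hnD : ∀ a ∈ D, n.1 (h.1 a) = m₂.1 a := fun a ha => by
    rw [hh a ha]
    have hnot : a + N ∉ C := fun hmem => by
      have := hN _ hmem
      omega
    refine (if_neg hnot).trans ((if_pos ⟨a, ha, rfl⟩).trans ?_)
    rw [Nat.add_sub_cancel]
  refine ⟨FElt n ⟨(x, h • y), hsep⟩, Prod.ext ?_ ?_⟩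
  · exact Quot.sound (FGen.supp n m₁ x C hC hsC hnC)
  · exact (Quot.sound (FGen.act n h y)).trans
      (Quot.sound (FGen.supp (n * incl h) m₂ y D hD hsD hnD))

/-- For nominal `Perm`-sets `X, Y`, the map
`p : F(X ∗ Y) → F(X) × F(Y)`, `p [m, (x, y)] = ([m, x], [m, y])`, is a well-defined
`Sb`-equivariant bijection, natural in `X` and `Y`; moreover `F(1)` is a singleton.
Hence `F` is strong monoidal from `(permNom, ∗, 1)` to `(sbNom, ×, 1)`. -/
theorem FObj_strong_monoidal {X Y X' Y' : Type*}
    [MulAction Pm X] [MulAction Pm Y] [MulAction Pm X'] [MulAction Pm Y']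
    (hX : IsNominal Pm X) (hY : IsNominal Pm Y)
    (hX' : IsNominal Pm X') (hY' : IsNominal Pm Y')
    (f : X → X') (hf : Equivariant Pm f) (g : Y → Y') (hg : Equivariant Pm g) :
    (∃ P : FObj (SepProd X Y) → FObj X × FObj Y,
      (∀ (m : Sb) (s : SepProd X Y), P (FElt m s) = (FElt m s.1.1, FElt m s.1.2)) ∧
      Function.Bijective P ∧
      Equivariant Sb P ∧
      (∀ (sf : SepProd X Y → SepProd X' Y') (Ff : FObj X → FObj X')
          (Fg : FObj Y → FObj Y')
          (Fsep : FObj (SepProd X Y) → FObj (SepProd X' Y'))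
          (P' : FObj (SepProd X' Y') → FObj X' × FObj Y'),
        (∀ s : SepProd X Y, (sf s).1 = (f s.1.1, g s.1.2)) →
        (∀ (m : Sb) (x : X), Ff (FElt m x) = FElt m (f x)) →
        (∀ (m : Sb) (y : Y), Fg (FElt m y) = FElt m (g y)) →
        (∀ (m : Sb) (s : SepProd X Y), Fsep (FElt m s) = FElt m (sf s)) →
        (∀ (m : Sb) (s' : SepProd X' Y'), P' (FElt m s') = (FElt m s'.1.1, FElt m s'.1.2)) →
        ∀ p : FObj (SepProd X Y), P' (Fsep p) = Prod.map Ff Fg (P p))) ∧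
    (Nonempty (FObj PUnit) ∧ Subsingleton (FObj PUnit)) := by
  refine ⟨⟨FSplit X Y, fun _ _ => rfl, ⟨FSplit_injective hX hY, FSplit_surjective hX hY⟩,
    ?_, ?_⟩, ⟨FElt 1 PUnit.unit⟩, ⟨?_⟩⟩
  · rintro n ⟨m, s⟩
    rfl
  · rintro sf Ff Fg Fsep P' hsf hFf hFg hFsep hP' ⟨m, s⟩
    show P' (Fsep (FElt m s)) = (Ff (FElt m s.1.1), Fg (FElt m s.1.2))
    rw [hFsep, hP', hFf, hFg, hsf]
  · -- The empty set supports the point, so all substitutions are identified.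
    rintro ⟨m, x⟩ ⟨m', x'⟩
    exact Quot.sound (FGen.supp m m' x ∅ Set.finite_empty
      (fun _ _ _ => Subsingleton.elim _ _) (fun a ha => absurd ha (Set.notMem_empty a)))
end

section
/- Let Y be a nominal Sb-set with dim(Y) ≤ 1, i.e., every element of Y has a support of cardinality at most 1. Then the counit map ε : FU(Y) → Y, ε([m, y]) = m·y, is an Sb-equivariant bijection (an isomorphism of nominal Sb-sets). -/
/-- The transposition of `a` and `b` as a finitely supported permutation of atoms. -/
def swapPm (a b : ℕ) : Pm :=
  ⟨(Equiv.swap a b : ℕ → ℕ), by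
    refine ⟨Set.Finite.subset (Set.toFinite {a, b}) ?_, (Equiv.swap a b).bijective⟩
    intro c hc
    by_contra hcon
    simp only [Set.mem_insert_iff, Set.mem_singleton_iff, not_or] at hcon
    exact hc (Equiv.swap_apply_of_ne_of_ne hcon.1 hcon.2)⟩

/-- The substitution `m` with its value at `b` replaced by `c`. -/
def updateSb (m : Sb) (b c : ℕ) : Sb :=
  ⟨fun d => if d = b then c else m.1 d, by
    refine Set.Finite.subset (Set.Finite.union m.2 (Set.finite_singleton b)) ?_
    intro d hd
    by_cases h : d = b
    · exact Or.inr h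
    · exact Or.inl fun hm => hd ((if_neg h).trans hm)⟩

theorem updateSb_self (m : Sb) (b c : ℕ) : (updateSb m b c).1 b = c :=
  if_pos rfl

theorem updateSb_of_ne (m : Sb) {a b : ℕ} (c : ℕ) (h : a ≠ b) :
    (updateSb m b c).1 a = m.1 a :=
  if_neg h

section

variable {Y : Type*} [MulAction Sb Y]

theorem incl_smul (g : Pm) (y : Y) : incl g • y = g • y := rfl

theorem Supports.toPm {C : Set ℕ} {y : Y} (h : Supports Sb C y) : Supports Pm C y :=
  fun g g' hg => h (incl g) (incl g') hg

theorem Supports.mono {C D : Set ℕ} {y : Y} (h : Supports Sb C y) (hCD : C ⊆ D) :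
    Supports Sb D y :=
  fun m m' hm => h m m' fun a ha => hm a (hCD ha)

/-- If `{a}` is an `Sb`-support of `y`, then so is `{b}` whenever the transposition of `a` and `b`
fixes `y`. -/
theorem supports_singleton_of_swap {a b : ℕ} {y : Y} (h : Supports Sb {a} y)
    (hfix : swapPm a b • y = y) : Supports Sb {b} y := by
  intro m m' hm
  rw [← hfix, ← incl_smul, smul_smul, smul_smul]
  refine h _ _ fun c hc => ?_
  obtain rfl : c = a := hc
  change m.1 (Equiv.swap c b c) = m'.1 (Equiv.swap c b c)
  rw [Equiv.swap_apply_left]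
  exact hm b rfl

/-- In dimension at most one, finite `Perm`-supports are `Sb`-supports. -/
theorem supports_Sb_of_supports_Pm {C D : Set ℕ} {y : Y} (hC : C.Finite) (hs : Supports Pm C y)
    (hD : D.Subsingleton) (hDs : Supports Sb D y) : Supports Sb C y := by
  rcases hD.eq_empty_or_singleton with rfl | ⟨a, rfl⟩
  · exact hDs.mono (Set.empty_subset C)
  by_cases ha : a ∈ C
  · exact hDs.mono (Set.singleton_subset_iff.2 ha)
  obtain ⟨b, hb⟩ := (hC.insert a).exists_notMem
  rw [Set.mem_insert_iff, not_or] at hb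
  have hfix : swapPm a b • y = y := by
    rw [hs (swapPm a b) 1, one_smul]
    intro c hc
    exact Equiv.swap_apply_of_ne_of_ne (fun h => ha (h ▸ hc)) (fun h => hb.2 (h ▸ hc))
  have hbs := supports_singleton_of_swap hDs hfix
  -- Since `a ≠ b`, some substitution agrees with `m` on the support `{a}` and with `m'` on the
  -- support `{b}`; so `m • y = m' • y` with no condition on `m` and `m'`.
  intro m m' _
  trans updateSb m b (m'.1 b) • y
  · refine hDs _ _ fun c hc => ?_
    obtain rfl : c = a := hc
    exact (updateSb_of_ne m _ (Ne.symm hb.1)).symm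
  · refine hbs _ _ fun c hc => ?_
    obtain rfl : c = b := hc
    exact updateSb_self m c _

theorem exists_perm_agree {C : Set ℕ} (hC : C.Subsingleton) (m : Sb) :
    ∃ g : Pm, ∀ a ∈ C, m.1 a = (incl g).1 a := by
  rcases hC.eq_empty_or_singleton with rfl | ⟨a, rfl⟩
  · exact ⟨1, fun a ha => ha.elim⟩
  · refine ⟨swapPm a (m.1 a), fun c hc => ?_⟩
    obtain rfl : c = a := hc
    exact (Equiv.swap_apply_left c (m.1 c)).symm

theorem FElt_eq_one {C : Set ℕ} {y : Y} (hC : C.Subsingleton) (hs : Supports Sb C y) (m : Sb) :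
    FElt m y = FElt 1 (m • y) := by
  obtain ⟨g, hg⟩ := exists_perm_agree hC m
  calc FElt m y = FElt (1 * incl g) y := by
        rw [one_mul]
        exact Quot.sound (FGen.supp m (incl g) y C hC.finite hs.toPm hg)
    _ = FElt 1 (g • y) := (Quot.sound (FGen.act 1 g y)).symm
    _ = FElt 1 (m • y) := by rw [hs m (incl g) hg, incl_smul]

end

/-- Let `Y` be a nominal `Sb`-set with `dim(Y) ≤ 1`, i.e. every
element has a support with at most one atom. Then the counit `ε : FU(Y) → Y`,
`ε [m, y] = m • y`, is a well-defined `Sb`-equivariant bijection (an isomorphism of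
nominal `Sb`-sets, where `U(Y)` is `Y` with the restricted `Perm`-action). -/
theorem counit_bijective_of_dim_le_one {Y : Type*} [MulAction Sb Y]
    (hY : IsNominal Sb Y)
    (hdim : ∀ y : Y, ∃ C : Set ℕ, C.Subsingleton ∧ Supports Sb C y) :
    ∃ ε : FObj Y → Y,
      (∀ (m : Sb) (y : Y), ε (FElt m y) = m • y) ∧
      Function.Bijective ε ∧ Equivariant Sb ε := by
  refine ⟨Quot.lift (fun p => p.1 • p.2) ?_, fun m y => rfl, ⟨?_, fun y => ?_⟩, ?_⟩
  · intro p q h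
    cases h with
    | act m g x => exact (mul_smul m (incl g) x).symm
    | supp m m' x C hC hs h =>
      obtain ⟨D, hD, hDs⟩ := hdim x
      exact supports_Sb_of_supports_Pm hC hs hD hDs m m' h
  · rintro ⟨m, y⟩ ⟨m', y'⟩ (h : m • y = m' • y')
    obtain ⟨C, hC, hCs⟩ := hdim y
    obtain ⟨C', hC', hCs'⟩ := hdim y'
    change FElt m y = FElt m' y'
    rw [FElt_eq_one hC hCs, FElt_eq_one hC' hCs', h]
  · exact ⟨FElt 1 y, one_smul Sb y⟩
  · rintro n ⟨m, y⟩
    exact mul_smul n m y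
end
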